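/- Let m ≥ 3 be odd and k ≥ 1 an integer, and suppose the continuous map f : I → I has a period-(2^k·m) point. Then f has a period-(2^k·(m+2)) point and a period-(2^{k+1}·3) point. -/

import Mathlib

/-- `x` is a periodic point of `f` with least period `m`. -/
def PeriodPt (f : ℝ → ℝ) (m : ℕ) (x : ℝ) : Prop :=
  f^[m] x = x ∧ ∀ i : ℕ, 0 < i → i < m → f^[i] x ≠ x

/-!
Let `p` be the least point of an orbit of odd period `m ≥ 3`. Near it there is an interval `(y, z)`
between two fixed points of `f^[2]` on which `f^[2]` lies below the diagonal, which `f` throws to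
the right of `z`, and which contains a point `v` with `f^[2] v = p`.

For odd `n` the map `f^[n]` sends `y` to `f y > y`, and if it fixes some `x ∈ (y, z)` then
`f^[n + 2]` sends `x` to `f^[2] x < x`, so `f^[n + 2]` has a fixed point in `(y, x)`. Hence the
leftmost fixed point of `f^[m + 2]` in `(y, v]` cannot have a smaller period.

Since `m` is odd, `f^[2]` moves `p` around the whole orbit, so it maps some orbit point `q ≤ y` to
the right of `z`. Then `[q, y]` covers `[v, z]`, and `[v, z]` covers both, under `f^[2]`; this
yields all periods of `f^[2]` other than `1`, along orbits too far left to have odd period under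
`f`. Passing to the iterate `f^[2 ^ k]` inserts the powers of two.
-/

open Function Set

section Period

variable {α : Type*}

theorem periodPt_iff_minimalPeriod_eq {f : ℝ → ℝ} {n : ℕ} {x : ℝ} (hn : 0 < n) :
    PeriodPt f n x ↔ minimalPeriod f x = n := by
  constructor
  · rintro ⟨hx : IsPeriodicPt f n x, hmin⟩
    refine (hx.minimalPeriod_le hn).antisymm (not_lt.1 fun hlt => ?_)
    exact hmin _ (hx.minimalPeriod_pos hn) hlt iterate_minimalPeriod
  · rintro rfl
    exact ⟨iterate_minimalPeriod, fun i hi hlt =>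
      not_isPeriodicPt_of_pos_of_lt_minimalPeriod hi.ne' hlt⟩

theorem minimalPeriod_restrict {f : α → α} {s : Set α} (h : MapsTo f s s) (x : s) :
    minimalPeriod (h.restrict f s s) x = minimalPeriod f x := by
  refine minimalPeriod_eq_minimalPeriod_iff.2 fun n => ?_
  rw [IsPeriodicPt, IsFixedPt, Subtype.ext_iff, h.iterate_restrict, MapsTo.val_restrict_apply]
  rfl

theorem minimalPeriod_iterate_of_eq_mul {f : α → α} {x : α} {d e : ℕ} (hd : d ≠ 0)
    (h : minimalPeriod f x = d * e) : minimalPeriod f^[d] x = e := by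
  rw [minimalPeriod_iterate_eq_div_gcd hd, h, Nat.gcd_mul_right_left,
    Nat.mul_div_cancel_left _ (Nat.pos_of_ne_zero hd)]

theorem exists_minimalPeriod_eq_prime_pow_mul {f : α → α} {x : α} {p j e : ℕ} (hp : p.Prime)
    (h : minimalPeriod f^[p ^ j] x = e) :
    ∃ i ≤ j, minimalPeriod f x = p ^ i * e ∧ (p ∣ e → i = j) := by
  rw [minimalPeriod_iterate_eq_div_gcd (pow_ne_zero j hp.ne_zero)] at h
  set N := minimalPeriod f x
  obtain ⟨i, hij, hgcd⟩ := (Nat.dvd_prime_pow hp).1 (N.gcd_dvd_right (p ^ j))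
  have hN : N = p ^ i * e := by
    rw [← h, ← hgcd, Nat.mul_div_cancel' (N.gcd_dvd_left (p ^ j))]
  refine ⟨i, hij, hN, fun hpe => hij.antisymm (not_lt.1 fun hlt => ?_)⟩
  have hdvd : p ^ (i + 1) ∣ p ^ i :=
    hgcd ▸ Nat.dvd_gcd (hN ▸ pow_succ p i ▸ mul_dvd_mul_left _ hpe) (pow_dvd_pow p hlt)
  exact absurd ((Nat.pow_dvd_pow_iff_le_right hp.one_lt).1 hdvd) (by lia)

theorem exists_forall_le_iterate [LinearOrder α] {f : α → α} {x : α}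
    (hpos : 0 < minimalPeriod f x) :
    ∃ p, minimalPeriod f p = minimalPeriod f x ∧ ∀ i, p ≤ f^[i] p := by
  have hx : x ∈ periodicPts f := minimalPeriod_pos_iff_mem_periodicPts.1 hpos
  obtain ⟨i₀, -, hi₀⟩ := (Finset.range (minimalPeriod f x)).exists_min_image (f^[·] x)
    ⟨0, Finset.mem_range.2 hpos⟩
  refine ⟨f^[i₀] x, minimalPeriod_apply_iterate hx i₀, fun i => ?_⟩
  rw [← iterate_add_apply, ← iterate_mod_minimalPeriod_eq (n := i + i₀)]
  exact hi₀ _ (Finset.mem_range.2 (Nat.mod_lt _ hpos))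

theorem exists_iterate_lt_and_le_iterate_succ [LinearOrder α] {f : α → α} {p c : α} {n : ℕ}
    (hp : p < c) (hn : c ≤ f^[n] p) : ∃ i, f^[i] p < c ∧ c ≤ f (f^[i] p) := by
  obtain ⟨i, hi, hi'⟩ := Nat.exists_not_and_succ_of_not_zero_of_exists
    (p := fun i => c ≤ f^[i] p) hp.not_ge ⟨n, hn⟩
  exact ⟨i, not_le.1 hi, iterate_succ_apply' f i p ▸ hi'⟩

theorem iterate_eq_apply_of_odd {f : α → α} {y : α} {n : ℕ} (hy : IsPeriodicPt f 2 y)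
    (hn : Odd n) : f^[n] y = f y := by
  obtain ⟨j, rfl⟩ := hn
  rw [← Nat.succ_eq_add_one, iterate_succ_apply', (hy.mul_const j).eq]

end Period

section Covering

variable {X Y : Type*} [ConditionallyCompleteLinearOrder X] [DenselyOrdered X]
  [TopologicalSpace X] [OrderTopology X]
  [LinearOrder Y] [TopologicalSpace Y] [OrderClosedTopology Y]

theorem lt_of_isPreconnected_of_forall_ne {Z : Type*} [TopologicalSpace Z] {f g : Z → Y} {s : Set Z}
    {v x : Z} (hs : IsPreconnected s) (hf : ContinuousOn f s) (hg : ContinuousOn g s)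
    (hne : ∀ w ∈ s, f w ≠ g w) (hv : v ∈ s) (hlt : f v < g v) (hx : x ∈ s) : f x < g x := by
  by_contra! hle
  obtain ⟨w, hw, hfg⟩ := hs.intermediate_value₂ hv hx hf hg hlt.le hle
  exact hne w hw hfg

theorem exists_image_Icc_eq_of_le {f : X → Y} {s t : X} (hst : s ≤ t)
    (hf : ContinuousOn f (Icc s t)) (hle : f s ≤ f t) :
    ∃ u w, u ≤ w ∧ Icc u w ⊆ Icc s t ∧ f '' Icc u w = Icc (f s) (f t) := by
  obtain ⟨u, ⟨hu, hfu : f u = f s⟩, hu_max⟩ := (isCompact_Icc.of_isClosed_subset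
    (hf.preimage_isClosed_of_isClosed isClosed_Icc (isClosed_singleton (x := f s)))
    inter_subset_left).exists_isGreatest ⟨s, left_mem_Icc.2 hst, rfl⟩
  have hf_ut : ContinuousOn f (Icc u t) := hf.mono (Icc_subset_Icc_left hu.1)
  obtain ⟨w, ⟨hw, hfw : f w = f t⟩, hw_min⟩ := (isCompact_Icc.of_isClosed_subset
    (hf_ut.preimage_isClosed_of_isClosed isClosed_Icc (isClosed_singleton (x := f t)))
    inter_subset_left).exists_isLeast ⟨t, right_mem_Icc.2 hu.2, rfl⟩
  have hf_uw : ContinuousOn f (Icc u w) := hf_ut.mono (Icc_subset_Icc_right hw.2)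
  refine ⟨u, w, hw.1, Icc_subset_Icc hu.1 hw.2, Subset.antisymm ?_ ?_⟩
  · rintro _ ⟨x, hx, rfl⟩
    constructor
    · by_contra! hlt
      obtain ⟨c, hc, hfc⟩ := intermediate_value_Icc hx.2 (hf_uw.mono (Icc_subset_Icc_left hx.1))
        ⟨hlt.le, hle.trans_eq hfw.symm⟩
      have hcu : c ≤ u := hu_max ⟨⟨hu.1.trans (hx.1.trans hc.1), hc.2.trans hw.2⟩, hfc⟩
      have hxu : x = u := (hc.1.trans hcu).antisymm hx.1
      exact hlt.ne (hxu ▸ hfu)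
    · by_contra! hlt
      obtain ⟨c, hc, hfc⟩ := intermediate_value_Icc hx.1 (hf_uw.mono (Icc_subset_Icc_right hx.2))
        ⟨hfu.trans_le hle, hlt.le⟩
      have hwc : w ≤ c := hw_min ⟨⟨hc.1, hc.2.trans (hx.2.trans hw.2)⟩, hfc⟩
      have hxw : x = w := hx.2.antisymm (hwc.trans hc.2)
      exact hlt.ne' (hxw ▸ hfw)
  · rw [← hfu, ← hfw]
    exact intermediate_value_Icc hw.1 hf_uw

theorem exists_le_image_eq_of_surjOn {f : X → Y} {J : NonemptyInterval X} {L : NonemptyInterval Y}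
    (hf : ContinuousOn f J) (hJL : SurjOn f J L) : ∃ K ≤ J, f '' K = L := by
  obtain ⟨s, hs, hfs⟩ := hJL ⟨le_rfl, L.fst_le_snd⟩
  obtain ⟨t, ht, hft⟩ := hJL ⟨L.fst_le_snd, le_rfl⟩
  have hle : f s ≤ f t := by rw [hfs, hft]; exact L.fst_le_snd
  rw [NonemptyInterval.coe_def L, ← hfs, ← hft]
  rcases le_total s t with hst | hts
  · obtain ⟨u, w, huw, hsub, himage⟩ :=
      exists_image_Icc_eq_of_le hst (hf.mono (Icc_subset_Icc hs.1 ht.2)) hle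
    exact ⟨⟨(u, w), huw⟩, NonemptyInterval.coe_subset_coe.1
      (hsub.trans (Icc_subset_Icc hs.1 ht.2)), himage⟩
  · obtain ⟨u, w, huw, hsub, himage⟩ := exists_image_Icc_eq_of_le (Y := Yᵒᵈ)
      (f := OrderDual.toDual ∘ f) hts (hf.mono (Icc_subset_Icc ht.1 hs.2)) hle
    refine ⟨⟨(u, w), huw⟩, NonemptyInterval.coe_subset_coe.1
      (hsub.trans (Icc_subset_Icc ht.1 hs.2)), himage.trans ?_⟩
    exact Icc_toDual

theorem exists_iterate_image_eq_of_surjOn {f : X → X} (hf : Continuous f)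
    {J : ℕ → NonemptyInterval X} {n : ℕ} (hJ : ∀ i < n, SurjOn f (J i) (J (i + 1))) :
    ∃ K : NonemptyInterval X, f^[n] '' K = J n ∧ ∀ i ≤ n, MapsTo f^[i] K (J i) := by
  induction n with
  | zero => exact ⟨J 0, image_id _, fun i hi => by rw [Nat.le_zero.1 hi]; exact mapsTo_id _⟩
  | succ n ih =>
    obtain ⟨K, hK, hmaps⟩ := ih fun i hi => hJ i (by lia)
    have hcover : SurjOn f^[n + 1] K (J (n + 1)) := by
      rw [iterate_succ', SurjOn, image_comp, hK]
      exact hJ n n.lt_succ_self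
    obtain ⟨K', hle, hK'⟩ := exists_le_image_eq_of_surjOn (hf.iterate (n + 1)).continuousOn hcover
    refine ⟨K', hK', fun i hi => ?_⟩
    rcases hi.lt_or_eq with hi | rfl
    · exact (hmaps i (by lia)).mono_left (NonemptyInterval.coe_subset_coe.2 hle)
    · exact mapsTo_iff_image_subset.2 hK'.subset

theorem exists_isPeriodicPt_of_surjOn {f : X → X} (hf : Continuous f) {J : ℕ → NonemptyInterval X}
    {n : ℕ} (hJ : ∀ i < n, SurjOn f (J i) (J (i + 1))) (hn : J n = J 0) :
    ∃ x, IsPeriodicPt f n x ∧ ∀ i ≤ n, f^[i] x ∈ J i := by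
  obtain ⟨K, hK, hmaps⟩ := exists_iterate_image_eq_of_surjOn hf hJ
  have hKJ : (K : Set X) ⊆ f^[n] '' K := by
    rw [hK, hn]
    exact hmaps 0 n.zero_le
  obtain ⟨s, hs, hfs⟩ := hKJ ⟨le_rfl, K.fst_le_snd⟩
  obtain ⟨t, ht, hft⟩ := hKJ ⟨K.fst_le_snd, le_rfl⟩
  obtain ⟨x, hx, hfix⟩ := exists_mem_uIcc_isFixedPt (hf.iterate n).continuousOn
    (ht.2.trans_eq hft.symm) (hfs.trans_le hs.1)
  have hxK : x ∈ (K : Set X) := ordConnected_Icc.uIcc_subset ht hs hx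
  exact ⟨x, hfix, fun i hi => hmaps i hi hxK⟩

theorem exists_minimalPeriod_eq_of_surjOn {f : X → X} (hf : Continuous f) {A B : NonemptyInterval X}
    (hdisj : Disjoint (A : Set X) B) (hAB : SurjOn f A B) (hBA : SurjOn f B A) (hBB : SurjOn f B B)
    {n : ℕ} (hn : 2 ≤ n) :
    ∃ x ∈ B, minimalPeriod f x = n ∧ ∀ i, f^[i] x ∈ (A ∪ B : Set X) := by
  let J : ℕ → NonemptyInterval X := fun i => if n ∣ i then A else B
  have hJA : ∀ {i}, n ∣ i → J i = A := fun h => if_pos h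
  have hJB : ∀ {i}, ¬n ∣ i → J i = B := fun h => if_neg h
  have hJ : ∀ i < n, SurjOn f (J i) (J (i + 1)) := by
    intro i _
    by_cases hi : n ∣ i
    · have hi' : ¬n ∣ i + 1 := fun h =>
        Nat.not_dvd_of_pos_of_lt one_pos hn ((Nat.dvd_add_right hi).1 h)
      rwa [hJA hi, hJB hi']
    · rw [hJB hi]
      by_cases hi' : n ∣ i + 1
      · rwa [hJA hi']
      · rwa [hJB hi']
  obtain ⟨x, hx, hmem⟩ := exists_isPeriodicPt_of_surjOn hf hJ
    ((hJA dvd_rfl).trans (hJA (dvd_zero n)).symm)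
  have hxA : x ∈ A := hJA (dvd_zero n) ▸ hmem 0 n.zero_le
  have hxB : ∀ i, 0 < i → i < n → f^[i] x ∈ B := fun i hi hin =>
    hJB (Nat.not_dvd_of_pos_of_lt hi hin) ▸ hmem i hin.le
  have hper : minimalPeriod f x = n := by
    refine (hx.minimalPeriod_le (by lia)).antisymm (not_lt.1 fun hlt => ?_)
    have hxB' := hxB _ (hx.minimalPeriod_pos (by lia)) hlt
    rw [iterate_minimalPeriod] at hxB'
    exact disjoint_left.1 hdisj hxA hxB'
  refine ⟨f x, hxB 1 one_pos hn, ?_, fun i => ?_⟩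
  · rw [minimalPeriod_apply (mk_mem_periodicPts (by lia) hx), hper]
  · rw [← iterate_succ_apply, ← iterate_mod_minimalPeriod_eq, hper]
    rcases ((i + 1) % n).eq_zero_or_pos with h | h
    · rw [h]
      exact .inl hxA
    · exact .inr (hxB _ h (Nat.mod_lt _ (by lia)))

end Covering

/-- A component `(y, z)` of the complement of the fixed points of `f^[2]` on which `f^[2]` lies
below the diagonal and every point is thrown by `f` to the right of `z`. The periodic orbits forced
by an orbit of odd period are found near such an interval. -/
structure IsDescentInterval {X : Type*} [LinearOrder X] (f : X → X) (y z : X) : Prop where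
  lt : y < z
  left_isPeriodicPt : IsPeriodicPt f 2 y
  right_isPeriodicPt : IsPeriodicPt f 2 z
  iterate_two_lt : ∀ x ∈ Ioo y z, f^[2] x < x
  le_apply : ∀ x ∈ Ioo y z, z ≤ f x

section Descent

variable {X : Type*}

namespace IsDescentInterval

theorem lt_apply_left [LinearOrder X] [DenselyOrdered X] [TopologicalSpace X] [OrderTopology X]
    {f : X → X} {y z : X} (h : IsDescentInterval f y z) (hf : Continuous f) : y < f y := by
  have hclosure : closure (Ioo y z) ⊆ f ⁻¹' Ici z :=
    closure_minimal h.le_apply (isClosed_Ici.preimage hf)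
  exact h.lt.trans_le (hclosure (closure_Ioo h.lt.ne ▸ left_mem_Icc.2 h.lt.le))

theorem even_minimalPeriod [LinearOrder X] {f : X → X} {x y z : X}
    (h : IsDescentInterval f y z) (hyx : y < x) (hper : 2 ≤ minimalPeriod f^[2] x)
    (hle : ∀ i, (f^[2])^[i] x ≤ z) : Even (minimalPeriod f x) := by
  have hne : ∀ i, (f^[2])^[i] x ≠ z := fun i hi => by
    have hx : x ∈ periodicPts f^[2] := minimalPeriod_pos_iff_mem_periodicPts.1 (by lia)
    have hz : minimalPeriod f^[2] z = 1 :=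
      minimalPeriod_eq_one_iff_isFixedPt.2 h.right_isPeriodicPt
    rw [← minimalPeriod_apply_iterate hx i, hi, hz] at hper
    lia
  by_contra hodd
  obtain ⟨r, hr⟩ := Nat.not_even_iff_odd.1 hodd
  -- In an odd cycle `f x` lies on the `f^[2]`-orbit of `x`, so that orbit would reach `z`.
  have horbit : f x = (f^[2])^[r + 1] x := by
    rw [← iterate_mul, show 2 * (r + 1) = 1 + minimalPeriod f x by lia,
      iterate_add_minimalPeriod_eq, iterate_one]
  have hzf : z ≤ f x := h.le_apply x ⟨hyx, (hle 0).lt_of_ne (hne 0)⟩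
  exact hne (r + 1) ((hle _).antisymm (horbit ▸ hzf))

end IsDescentInterval

variable [ConditionallyCompleteLinearOrder X] [DenselyOrdered X] [TopologicalSpace X]
  [OrderTopology X] {f : X → X} {y z v : X}

theorem isDescentInterval_of_forall_not_isPeriodicPt (hf : Continuous f)
    (hy : IsPeriodicPt f 2 y) (hz : IsPeriodicPt f 2 z)
    (hne : ∀ x ∈ Ioo y z, ¬IsPeriodicPt f 2 x) (hv : v ∈ Ioo y z) (hv_lt : f^[2] v < v)
    (hlt_v : v < f v) : IsDescentInterval f y z := by
  have hdown : ∀ x ∈ Ioo y z, f^[2] x < x := fun x hx =>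
    lt_of_isPreconnected_of_forall_ne isPreconnected_Ioo (hf.iterate 2).continuousOn
      continuousOn_id hne hv hv_lt hx
  have hup : ∀ x ∈ Ioo y z, x < f x := fun x hx =>
    lt_of_isPreconnected_of_forall_ne isPreconnected_Ioo continuousOn_id hf.continuousOn
      (fun w hw hfix => hne w hw (IsFixedPt.isPeriodicPt hfix.symm 2)) hv hlt_v hx
  refine ⟨hv.1.trans hv.2, hy, hz, hdown, fun x hx => not_lt.1 fun hfx => ?_⟩
  have hfx_up : f x < f (f x) := hup (f x) ⟨hx.1.trans (hup x hx), hfx⟩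
  exact lt_asymm (hup x hx) (hfx_up.trans (hdown x hx))

theorem exists_isDescentInterval (hf : Continuous f) {p : X} {n : ℕ} (hn : 2 ≤ n)
    (hp : minimalPeriod f p = n + 1) (hmin : ∀ i, p ≤ f^[i] p) :
    ∃ y z, IsDescentInterval f y z ∧ p ≤ y ∧ z ≤ f^[n] p ∧ ∃ v ∈ Ioo y z, f^[2] v = p := by
  have hne : ∀ i, i ≠ 0 → i < n + 1 → f^[i] p ≠ p := fun i hi hlt =>
    not_isPeriodicPt_of_pos_of_lt_minimalPeriod hi (hp ▸ hlt)
  set b := f^[n] p with hb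
  have hfb : f b = p := by
    rw [hb, ← iterate_succ_apply' f, ← Nat.add_one, ← hp, iterate_minimalPeriod]
  have hpb : p < b := (hmin n).lt_of_ne' (hne n (by lia) n.lt_succ_self)
  obtain ⟨i, hi, hi'⟩ := exists_iterate_lt_and_le_iterate_succ hpb hb.le
  obtain ⟨v, hv, hfv⟩ := intermediate_value_Icc' hi.le hf.continuousOn ⟨hfb.trans_le hpb.le, hi'⟩
  have hffv : f^[2] v = p := (congrArg f hfv).trans hfb
  have hvb : v < b := hv.2.lt_of_ne fun h => hpb.ne (by rw [← hfb, ← h, hfv, h])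
  have hpv : p < v := ((hmin i).trans hv.1).lt_of_ne fun h =>
    hne 2 two_ne_zero (by lia) (h ▸ hffv.trans h)
  have hclosed : IsClosed (fixedPoints f^[2]) := isClosed_fixedPoints (hf.iterate 2)
  obtain ⟨y, ⟨hy, hyper⟩, hy_max⟩ := (isCompact_Icc.inter_right hclosed).exists_isGreatest <|
    exists_mem_Icc_isFixedPt (hf.iterate 2).continuousOn hpv.le (hmin 2) (hffv.trans_le hpv.le)
  obtain ⟨w, hw, hfw⟩ := exists_mem_uIcc_isFixedPt (a := v) (b := b) hf.continuousOn
    (hvb.le.trans_eq hfv.symm) (hfb.trans_le hpb.le)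
  obtain ⟨z, ⟨hz, hzper⟩, hz_min⟩ := (isCompact_Icc.inter_right hclosed).exists_isLeast
    ⟨w, uIcc_of_le hvb.le ▸ hw, hfw.isPeriodicPt 2⟩
  have hv_not : ¬IsPeriodicPt f 2 v := fun h => hpv.ne (hffv.symm.trans h)
  have hyv : y < v := hy.2.lt_of_ne fun h => hv_not (h ▸ hyper)
  have hvz : v < z := hz.1.lt_of_ne fun h => hv_not (h ▸ hzper)
  refine ⟨y, z, ?_, hy.1, hz.2, v, ⟨hyv, hvz⟩, hffv⟩
  refine isDescentInterval_of_forall_not_isPeriodicPt hf hyper hzper (fun x hx hxper => ?_)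
    ⟨hyv, hvz⟩ (hffv.trans_lt hpv) (hvb.trans_eq hfv.symm)
  rcases le_total x v with hxv | hvx
  · exact hx.1.not_ge (hy_max ⟨⟨hy.1.trans hx.1.le, hxv⟩, hxper⟩)
  · exact hx.2.not_ge (hz_min ⟨⟨hvx, hx.2.le.trans hz.2⟩, hxper⟩)

namespace IsDescentInterval

theorem exists_isPeriodicPt_add_two (h : IsDescentInterval f y z) (hf : Continuous f) {n : ℕ}
    (hn : Odd n) {x : X} (hx : x ∈ Ioo y z) (hper : IsPeriodicPt f n x) :
    ∃ w ∈ Ioo y x, IsPeriodicPt f (n + 2) w := by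
  have hy : f^[n + 2] y = f y :=
    iterate_eq_apply_of_odd h.left_isPeriodicPt (hn.add_even even_two)
  have hx_lt : f^[n + 2] x < x := by
    rw [add_comm, iterate_add_apply, hper.eq]
    exact h.iterate_two_lt x hx
  have hy_lt : y < f^[n + 2] y := hy ▸ h.lt_apply_left hf
  obtain ⟨w, hw, hfix⟩ := exists_mem_Icc_isFixedPt (hf.iterate (n + 2)).continuousOn hx.1.le
    hy_lt.le hx_lt.le
  refine ⟨w, ⟨hw.1.lt_of_ne ?_, hw.2.lt_of_ne ?_⟩, hfix⟩
  · rintro rfl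
    exact hy_lt.ne' hfix
  · rintro rfl
    exact hx_lt.ne hfix

theorem exists_isPeriodicPt_of_lt (h : IsDescentInterval f y z) (hf : Continuous f) {k n : ℕ}
    (hk : Odd k) (hn : Odd n) (hkn : k < n) {x : X} (hx : x ∈ Ioo y z)
    (hper : IsPeriodicPt f k x) : ∃ w ∈ Ioo y x, IsPeriodicPt f n w := by
  obtain ⟨d, hd⟩ := Nat.Odd.sub_odd hn hk
  obtain ⟨j, rfl⟩ : ∃ j, n = k + 2 * (j + 1) := ⟨d - 1, by lia⟩
  clear hd hkn hn
  induction j with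
  | zero => exact h.exists_isPeriodicPt_add_two hf hk hx hper
  | succ j ih =>
    obtain ⟨w, hw, hwper⟩ := ih
    obtain ⟨u, hu, huper⟩ := h.exists_isPeriodicPt_add_two hf (hk.add_even (even_two_mul _))
      ⟨hw.1, hw.2.trans hx.2⟩ hwper
    exact ⟨u, ⟨hu.1, hu.2.trans hw.2⟩, huper⟩

theorem exists_minimalPeriod_eq_of_odd (h : IsDescentInterval f y z) (hf : Continuous f) {n : ℕ}
    (hn : Odd n) (hv : v ∈ Ioo y z) (hv_le : f^[n] v ≤ v) : ∃ x, minimalPeriod f x = n := by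
  have hy_lt : y < f^[n] y :=
    iterate_eq_apply_of_odd h.left_isPeriodicPt hn ▸ h.lt_apply_left hf
  obtain ⟨u, ⟨hu, huper : IsPeriodicPt f n u⟩, hu_min⟩ := (isCompact_Icc.inter_right
    (isClosed_fixedPoints (hf.iterate n))).exists_isLeast <|
      exists_mem_Icc_isFixedPt (hf.iterate n).continuousOn hv.1.le hy_lt.le hv_le
  have hyu : y < u := hu.1.lt_of_ne fun heq => hy_lt.ne' (heq ▸ huper)
  refine ⟨u, (huper.minimalPeriod_le hn.pos).antisymm (not_lt.1 fun hlt => ?_)⟩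
  obtain ⟨w, hw, hwper⟩ := h.exists_isPeriodicPt_of_lt hf
    (hn.of_dvd_nat huper.minimalPeriod_dvd) hn hlt ⟨hyu, hu.2.trans_lt hv.2⟩
    (isPeriodicPt_minimalPeriod f u)
  exact hw.2.not_ge (hu_min ⟨⟨hw.1.le, hw.2.le.trans hu.2⟩, hwper⟩)

theorem exists_minimalPeriod_eq_two_mul (h : IsDescentInterval f y z) (hf : Continuous f) {q : X}
    (hv : v ∈ Ioo y z) (hqy : q ≤ y) (hzq : z ≤ f^[2] q) (hvq : f^[2] v ≤ q) {n : ℕ}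
    (hn : 2 ≤ n) : ∃ x, minimalPeriod f x = 2 * n := by
  have hf2 : Continuous f^[2] := hf.iterate 2
  have hyy : f^[2] y = y := h.left_isPeriodicPt
  have hzz : f^[2] z = z := h.right_isPeriodicPt
  let A : NonemptyInterval X := ⟨(q, y), hqy⟩
  let B : NonemptyInterval X := ⟨(v, z), hv.2.le⟩
  have hA : SurjOn f^[2] A (Icc y z) :=
    (Icc_subset_Icc hyy.le hzq).trans (intermediate_value_Icc' hqy hf2.continuousOn)
  have hB : SurjOn f^[2] B (Icc q z) :=
    (Icc_subset_Icc hvq hzz.ge).trans (intermediate_value_Icc hv.2.le hf2.continuousOn)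
  obtain ⟨x, hxB, hper, hmem⟩ := exists_minimalPeriod_eq_of_surjOn hf2 (A := A) (B := B)
    (disjoint_left.2 fun w hwA hwB => (hwA.2.trans_lt hv.1).not_ge hwB.1)
    (hA.mono subset_rfl (Icc_subset_Icc_left hv.1.le))
    (hB.mono subset_rfl (Icc_subset_Icc_right h.lt.le))
    (hB.mono subset_rfl (Icc_subset_Icc_left (hqy.trans hv.1.le))) hn
  have heven : Even (minimalPeriod f x) :=
    h.even_minimalPeriod (hv.1.trans_le hxB.1) (hn.trans_eq hper.symm) fun i =>
      (hmem i).elim (fun hA => hA.2.trans h.lt.le) (fun hB => hB.2)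
  refine ⟨x, ?_⟩
  rw [minimalPeriod_iterate_eq_div_gcd two_ne_zero, Nat.gcd_eq_right heven.two_dvd] at hper
  rw [← hper, Nat.mul_div_cancel' heven.two_dvd]

end IsDescentInterval

end Descent

section Forcing

variable {X : Type*} [ConditionallyCompleteLinearOrder X] [DenselyOrdered X]
  [TopologicalSpace X] [OrderTopology X] {f : X → X} {m k : ℕ} {x : X}

theorem exists_minimalPeriod_eq_add_two (hf : Continuous f) (hm : 3 ≤ m) (hodd : Odd m)
    (hx : minimalPeriod f x = m) : ∃ y, minimalPeriod f y = m + 2 := by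
  obtain ⟨p, hp, hmin⟩ := exists_forall_le_iterate (f := f) (x := x) (by lia)
  rw [hx] at hp
  obtain ⟨y, z, h, hpy, -, v, hv, hvp⟩ :=
    exists_isDescentInterval hf (n := m - 1) (by lia) (by lia) hmin
  refine h.exists_minimalPeriod_eq_of_odd hf (hodd.add_even even_two) hv ?_
  rw [iterate_add_apply, hvp, ← hp, iterate_minimalPeriod]
  exact hpy.trans hv.1.le

theorem exists_minimalPeriod_eq_two_mul (hf : Continuous f) (hm : 3 ≤ m) (hodd : Odd m)
    (hx : minimalPeriod f x = m) {n : ℕ} (hn : 2 ≤ n) : ∃ y, minimalPeriod f y = 2 * n := by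
  obtain ⟨r, rfl⟩ := hodd
  obtain ⟨p, hp, hmin⟩ := exists_forall_le_iterate (f := f) (x := x) (by lia)
  obtain ⟨y, z, h, hpy, hz, v, hv, hvp⟩ :=
    exists_isDescentInterval hf (by lia) (hp.trans hx) hmin
  rw [iterate_mul] at hz
  obtain ⟨i, hi, hi'⟩ := exists_iterate_lt_and_le_iterate_succ (hpy.trans_lt h.lt) hz
  refine h.exists_minimalPeriod_eq_two_mul hf hv (not_lt.1 fun hlt => ?_) hi' ?_ hn
  · exact lt_asymm hi (hi'.trans_lt (h.iterate_two_lt _ ⟨hlt, hi⟩))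
  · rw [hvp, ← iterate_mul]
    exact hmin _

theorem exists_minimalPeriod_eq_two_pow_succ_mul (hf : Continuous f) (hm : 3 ≤ m) (hodd : Odd m)
    (hx : minimalPeriod f x = 2 ^ k * m) {n : ℕ} (hn : 2 ≤ n) :
    ∃ y, minimalPeriod f y = 2 ^ (k + 1) * n := by
  obtain ⟨y, hy⟩ := exists_minimalPeriod_eq_two_mul (hf.iterate (2 ^ k)) hm hodd
    (minimalPeriod_iterate_of_eq_mul (by positivity) hx) hn
  obtain ⟨i, -, hper, hi⟩ := exists_minimalPeriod_eq_prime_pow_mul Nat.prime_two hy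
  exact ⟨y, by rw [hper, hi (dvd_mul_right 2 n), pow_succ, mul_assoc]⟩

theorem exists_minimalPeriod_eq_two_pow_mul_add_two (hf : Continuous f) (hm : 3 ≤ m)
    (hodd : Odd m) (hx : minimalPeriod f x = 2 ^ k * m) :
    ∃ y, minimalPeriod f y = 2 ^ k * (m + 2) := by
  obtain ⟨y, hy⟩ := exists_minimalPeriod_eq_add_two (hf.iterate (2 ^ k)) hm hodd
    (minimalPeriod_iterate_of_eq_mul (by positivity) hx)
  obtain ⟨i, hik, hper, -⟩ := exists_minimalPeriod_eq_prime_pow_mul Nat.prime_two hy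
  rcases hik.eq_or_lt with rfl | hik
  · exact ⟨y, hper⟩
  · -- The period `2 ^ i * (m + 2)` of `y` lacks factors of two, but it forces its own doublings.
    obtain ⟨j, rfl⟩ := Nat.exists_eq_add_of_lt hik
    obtain ⟨w, hw⟩ := exists_minimalPeriod_eq_two_pow_succ_mul hf (by lia)
      (hodd.add_even even_two) hper (n := 2 ^ j * (m + 2))
      (le_mul_of_one_le_of_le Nat.one_le_two_pow (by lia))
    exact ⟨w, by rw [hw]; ring⟩

end Forcing

theorem doubling_odd_period_forcing_general {X : Type*} [ConditionallyCompleteLinearOrder X]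
    [DenselyOrdered X] [TopologicalSpace X] [OrderTopology X] {s : Set X} (hs : s.OrdConnected)
    {f : X → X} (hcont : ContinuousOn f s) (hmaps : MapsTo f s s) {m k : ℕ} (hm : 3 ≤ m)
    (hodd : Odd m) {x : X} (hx : x ∈ s) (hper : minimalPeriod f x = 2 ^ k * m) :
    (∃ y ∈ s, minimalPeriod f y = 2 ^ k * (m + 2)) ∧
      ∀ n, 2 ≤ n → ∃ z ∈ s, minimalPeriod f z = 2 ^ (k + 1) * n := by
  have : Inhabited s := ⟨⟨x, hx⟩⟩
  have hF : Continuous (hmaps.restrict f s s) := hcont.mapsToRestrict hmaps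
  have hxF : minimalPeriod (hmaps.restrict f s s) ⟨x, hx⟩ = 2 ^ k * m := by
    rw [minimalPeriod_restrict, hper]
  refine ⟨?_, fun n hn => ?_⟩
  · obtain ⟨y, hy⟩ := exists_minimalPeriod_eq_two_pow_mul_add_two hF hm hodd hxF
    exact ⟨y, y.2, by rw [← minimalPeriod_restrict hmaps, hy]⟩
  · obtain ⟨z, hz⟩ := exists_minimalPeriod_eq_two_pow_succ_mul hF hm hodd hxF hn
    exact ⟨z, z.2, by rw [← minimalPeriod_restrict hmaps, hz]⟩

theorem doubling_odd_period_forcing (a b : ℝ) (hab : a ≤ b) (f : ℝ → ℝ)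
    (hcont : ContinuousOn f (Set.Icc a b))
    (hmaps : Set.MapsTo f (Set.Icc a b) (Set.Icc a b))
    (m : ℕ) (hm : 3 ≤ m) (hodd : Odd m) (k : ℕ) (hk : 1 ≤ k)
    (x : ℝ) (hx : x ∈ Set.Icc a b) (hper : PeriodPt f (2 ^ k * m) x) :
    (∃ y ∈ Set.Icc a b, PeriodPt f (2 ^ k * (m + 2)) y) ∧
      (∃ z ∈ Set.Icc a b, PeriodPt f (2 ^ (k + 1) * 3) z) := by
  simp only [periodPt_iff_minimalPeriod_eq (show 0 < 2 ^ k * m by positivity),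
    periodPt_iff_minimalPeriod_eq (show 0 < 2 ^ k * (m + 2) by positivity),
    periodPt_iff_minimalPeriod_eq (show 0 < 2 ^ (k + 1) * 3 by positivity)] at hper ⊢
  exact (doubling_odd_period_forcing_general ordConnected_Icc hcont hmaps hm hodd hx hper).imp_right
    (· 3 (by norm_num))
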